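/- Let Z_2 be the ring of 2-adic integers and S = Z_2[[x,y]]/(x^k − y^l − 2^m) with k, l, m > 2. Set u = (x^{k-2} y^{l-2})^{1/2} and v = 2^{-1}(x^{k-1} − u y) in an algebraic closure of Frac(S). Then v satisfies v^2 + u y v − x^{k-2} 2^{m-2} = 0; hence T = S[u, v] is a module-finite extension of S, and x^{k-1} = u y + 2v ∈ (y, 2)T, so x ∈ rad((y,2)T) ∩ integral relations, while x ∉ (y,2)S. Consequently S is not a direct summand of T as an S-module, i.e. S is not a splinter. -/

import Mathlib

open MvPowerSeries

/-- The ring `S = ℤ₂[[x,y]]/(x^k − y^l − 2^m)`. -/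
abbrev SinghRing (k l m : ℕ) : Type :=
  MvPowerSeries (Fin 2) ℤ_[2] ⧸
    (Ideal.span {(X 0 : MvPowerSeries (Fin 2) ℤ_[2]) ^ k - X 1 ^ l - 2 ^ m})

/-- The image of `x` in `S`. -/
noncomputable def singhX (k l m : ℕ) : SinghRing k l m :=
  Ideal.Quotient.mk _ (X 0)

/-- The image of `y` in `S`. -/
noncomputable def singhY (k l m : ℕ) : SinghRing k l m :=
  Ideal.Quotient.mk _ (X 1)

/-- The module-finite extension `T = S[u,v]` of `S`, where `u = (x^{k-2}y^{l-2})^{1/2}`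
and `v = 2⁻¹(x^{k-1} − uy)`, so that `v² + uyv − x^{k-2}2^{m-2} = 0`. -/
structure SinghExt (k l m : ℕ) where
  T : Type
  [commRing : CommRing T]
  [isDomain : IsDomain T]
  [alg : Algebra (SinghRing k l m) T]
  inj : Function.Injective (algebraMap (SinghRing k l m) T)
  fin : Module.Finite (SinghRing k l m) T
  u : T
  v : T
  hu : u ^ 2 = algebraMap _ T (singhX k l m) ^ (k - 2) *
    algebraMap _ T (singhY k l m) ^ (l - 2)
  hv : 2 * v = algebraMap _ T (singhX k l m) ^ (k - 1) - u * algebraMap _ T (singhY k l m)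
  hquad : v ^ 2 + u * algebraMap _ T (singhY k l m) * v -
    algebraMap _ T (singhX k l m) ^ (k - 2) * 2 ^ (m - 2) = 0
  hadj : Algebra.adjoin (SinghRing k l m) {u, v} = ⊤
  hxk : algebraMap _ T (singhX k l m) ^ (k - 1) ∈
    Ideal.span {algebraMap _ T (singhY k l m), (2 : T)}

attribute [instance] SinghExt.commRing SinghExt.isDomain SinghExt.alg

/-!
Put `p = x ^ (k - 2)`, `q = y ^ (l - 2)`, `r = 2 ^ (m - 2)`, so `p * x ^ 2 - q * y ^ 2 = 4 * r`.
If `u ^ 2 = p * q` and `2 * v = p * x - u * y`, then `4 * v * (v + u * y) = 4 * p * r`, hence `v` is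
integral and `p * x = u * y + 2 * v` lies in `(y, 2) T` for `T = S[u, v]`. A retraction `T → S`
would contract this to `x ^ (k - 1) ∈ (y, 2) S`, which fails since `S / (y, 2) = 𝔽₂[x] / (x ^ k)`.

That `S` is a domain is seen by Weierstrass division: `A = ℤ₂⟦y⟧` is complete with respect to
`c = y ^ l + 2 ^ m`, so `S = A⟦x⟧ / (x ^ k - c)` is `A[x] / (x ^ k - c)`, and `x ^ k - c` is
Eisenstein at any prime factor of `c` because `c` is squarefree, having no common factor with its
derivative `l * y ^ (l - 1)`.
-/

theorem comap_map_algebraMap_of_retraction {S T : Type*} [CommRing S] [CommRing T] [Algebra S T]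
    {φ : T →ₗ[S] S} (hφ : φ ∘ₗ Algebra.linearMap S T = LinearMap.id) (I : Ideal S) :
    (I.map (algebraMap S T)).comap (algebraMap S T) = I := by
  refine le_antisymm (fun s hs => ?_) Ideal.le_comap_map
  have hs' : algebraMap S T s ∈ I • (⊤ : Submodule S T) := by
    rwa [Ideal.smul_top_eq_map, Submodule.restrictScalars_mem]
  have hφs := Submodule.mem_map_of_mem (f := φ) hs'
  rw [Submodule.map_smul'', show φ (algebraMap S T s) = s from LinearMap.congr_fun hφ s] at hφs
  exact Ideal.mul_le_left hφs

section PowerSeriesSquarefree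

variable {R : Type*} [CommRing R]

theorem irreducible_powerSeries_C {p : R} (hp : Irreducible p) :
    Irreducible (PowerSeries.C p) := by
  refine ⟨fun h => hp.not_isUnit (by simpa using PowerSeries.isUnit_iff_constantCoeff.1 h),
    fun f g hfg => ?_⟩
  have hp_eq : p = PowerSeries.constantCoeff f * PowerSeries.constantCoeff g := by
    simpa using congrArg PowerSeries.constantCoeff hfg
  simpa only [PowerSeries.isUnit_iff_constantCoeff] using hp.isUnit_or_isUnit hp_eq

variable [IsDomain R]

theorem exists_prime_C_dvd_of_dvd_C [UniqueFactorizationMonoid R] {π : PowerSeries R}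
    (hπ : Prime π) {r : R} (hr : r ≠ 0) (hdvd : π ∣ PowerSeries.C r) :
    ∃ p : R, Prime p ∧ PowerSeries.C p ∣ π := by
  have hπ_prime : (Ideal.span {π}).IsPrime := (Ideal.span_singleton_prime hπ.ne_zero).2 hπ
  have hr_mem : r ∈ (Ideal.span {π}).comap PowerSeries.C := Ideal.mem_span_singleton.2 hdvd
  obtain ⟨p, hp_mem, hp⟩ := (hπ_prime.comap PowerSeries.C).exists_mem_prime_of_ne_bot
    (Submodule.ne_bot_iff _ |>.2 ⟨r, hr_mem, hr⟩)
  have hπp : π ∣ PowerSeries.C p := Ideal.mem_span_singleton.1 hp_mem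
  exact ⟨p, hp,
    (hπ.irreducible.associated_of_dvd (irreducible_powerSeries_C hp.irreducible) hπp).symm.dvd⟩

theorem squarefree_X_pow_add_C [IsPrincipalIdealRing R] {a : R} (ha : a ≠ 0) {l : ℕ}
    (hl : (l : R) ≠ 0) : Squarefree (PowerSeries.X ^ l + PowerSeries.C a) := by
  have hl0 : l ≠ 0 := by rintro rfl; simp at hl
  have coeff_c : PowerSeries.coeff l (PowerSeries.X ^ l + PowerSeries.C a) = 1 := by
    simp [PowerSeries.coeff_C, hl0]
  have hc0 : PowerSeries.X ^ l + PowerSeries.C a ≠ 0 := fun h => by simp [h] at coeff_c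
  refine (squarefree_iff_no_irreducibles hc0).2 fun π hπ hsq => ?_
  have hπc : π ∣ PowerSeries.X ^ l + PowerSeries.C a := (dvd_mul_right π π).trans hsq
  have hπ_deriv : π ∣ PowerSeries.C (l : R) * PowerSeries.X ^ (l - 1) := by
    obtain ⟨g, hg⟩ := hsq
    have hd := congrArg (PowerSeries.derivative R) hg
    simp only [map_add, PowerSeries.derivative_pow, PowerSeries.derivative_X,
      PowerSeries.derivative_C, Derivation.leibniz, smul_eq_mul, mul_one, add_zero] at hd
    rw [map_natCast, hd]
    exact ⟨π * PowerSeries.derivative R g + 2 * g * PowerSeries.derivative R π, by ring⟩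
  rcases hπ.prime.dvd_or_dvd hπ_deriv with hπl | hπX
  · obtain ⟨p, hp, hpπ⟩ := exists_prime_C_dvd_of_dvd_C hπ.prime hl hπl
    obtain ⟨g, hg⟩ := hpπ.trans hπc
    rw [hg, PowerSeries.coeff_C_mul] at coeff_c
    exact hp.not_isUnit (IsUnit.of_mul_eq_one _ coeff_c)
  · have hXc : PowerSeries.X ∣ PowerSeries.X ^ l + PowerSeries.C a :=
      (hπ.associated_of_dvd PowerSeries.X_irreducible (hπ.prime.dvd_of_dvd_pow hπX)).symm.dvd.trans
        hπc
    exact ha (by simpa [hl0] using PowerSeries.X_dvd_iff.1 hXc)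

end PowerSeriesSquarefree

section Weierstrass

theorem isAdicComplete_of_compactSpace {A : Type*} [CommRing A] [IsDomain A] [IsNoetherianRing A]
    [TopologicalSpace A] [IsTopologicalRing A] [CompactSpace A] [T2Space A] {I : Ideal A}
    (hI : I ≠ ⊤) : IsAdicComplete I A := by
  have : IsHausdorff I A := IsHausdorff.of_isDomain I hI
  refine { prec' := fun f hf => ?_ }
  simp only [smul_eq_mul, Ideal.mul_top, SModEq.sub_mem] at hf ⊢
  let coset (n : ℕ) : Set A := {a | f n - a ∈ I ^ n}
  have coset_closed (n : ℕ) : IsClosed (coset n) :=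
    (IsNoetherianRing.isClosed_ideal (I ^ n)).preimage (continuous_const.sub continuous_id)
  have coset_anti (n : ℕ) : coset (n + 1) ⊆ coset n := fun a ha => by
    simpa [coset] using add_mem (hf n.le_succ) (Ideal.pow_le_pow_right n.le_succ ha)
  obtain ⟨L, hL⟩ := IsCompact.nonempty_iInter_of_sequence_nonempty_isCompact_isClosed coset
    coset_anti (fun n => ⟨f n, by simp [coset]⟩) (coset_closed 0).isCompact coset_closed
  exact ⟨L, Set.mem_iInter.1 hL⟩

variable {A : Type*} [CommRing A]

theorem isDistinguishedAt_X_pow_sub_C [Nontrivial A] {I : Ideal A} {c : A} (hc : c ∈ I) {k : ℕ}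
    (hk : k ≠ 0) : (Polynomial.X ^ k - Polynomial.C c).IsDistinguishedAt I := by
  refine ⟨⟨fun {n} hn => ?_⟩, Polynomial.monic_X_pow_sub_C c hk⟩
  rw [Polynomial.natDegree_X_pow_sub_C] at hn
  rw [Polynomial.coeff_sub, Polynomial.coeff_X_pow, if_neg hn.ne, zero_sub, Polynomial.coeff_C]
  split_ifs
  · exact neg_mem hc
  · simp

variable [IsDomain A] [UniqueFactorizationMonoid A]

theorem prime_X_pow_sub_C_of_squarefree {c : A} (hc : Squarefree c) (hc_unit : ¬ IsUnit c) {k : ℕ}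
    (hk : k ≠ 0) : Prime (Polynomial.X ^ k - Polynomial.C c) := by
  obtain ⟨π, hπ, hπc⟩ := WfDvdMonoid.exists_irreducible_factor hc_unit hc.ne_zero
  have hP : (Ideal.span {π}).IsPrime := (Ideal.span_singleton_prime hπ.ne_zero).2 hπ.prime
  have hdist := isDistinguishedAt_X_pow_sub_C (Ideal.mem_span_singleton.2 hπc) hk
  have hcoeff : (Polynomial.X ^ k - Polynomial.C c).coeff 0 ∉ Ideal.span {π} ^ 2 := by
    rw [Ideal.span_singleton_pow, Ideal.mem_span_singleton, sq]
    simpa [hk.symm] using fun h => hπ.not_isUnit (hc π h)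
  have heis := hdist.monic.isEisensteinAt_of_mem_of_notMem hP.ne_top hdist.mem hcoeff
  refine (heis.irreducible hP hdist.monic.isPrimitive ?_).prime
  rw [Polynomial.natDegree_X_pow_sub_C]
  exact hk.pos

theorem isDomain_powerSeries_quotient_X_pow_sub_C {I : Ideal A} [IsAdicComplete I A] {c : A}
    (hcI : c ∈ I) (hc : Squarefree c) {k : ℕ} (hk : k ≠ 0) :
    IsDomain (PowerSeries A ⧸ Ideal.span {PowerSeries.X ^ k - PowerSeries.C c}) := by
  have hc_unit : ¬ IsUnit c := fun h => by
    obtain rfl := I.eq_top_of_isUnit_mem hcI h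
    exact not_subsingleton A (IsAdicComplete.subsingleton A ‹_›)
  have hprime := prime_X_pow_sub_C_of_squarefree hc hc_unit hk
  have : (Ideal.span {Polynomial.X ^ k - Polynomial.C c}).IsPrime :=
    (Ideal.span_singleton_prime hprime.ne_zero).2 hprime
  have e := (isDistinguishedAt_X_pow_sub_C hcI hk).algEquivQuotient
  rw [Polynomial.coe_sub, Polynomial.coe_pow, Polynomial.coe_X, Polynomial.coe_C] at e
  exact e.symm.toMulEquiv.isDomain _

end Weierstrass

section TwoVariables

variable (R : Type*) [CommRing R]

/-- The isomorphism `R⟦x, y⟧ ≃ R⟦y⟧⟦x⟧`; the outer variable of the target is `X 0`. -/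
noncomputable def finTwoPowerSeriesEquiv :
    MvPowerSeries (Fin 2) R ≃ₐ[R] PowerSeries (PowerSeries R) :=
  (renameEquiv R ((_root_.finSuccEquiv 1).trans
    (Equiv.optionCongr (Equiv.ofUnique (Fin 1) Unit)))).trans (optionEquivLeft Unit R)

theorem finTwoPowerSeriesEquiv_X_zero : finTwoPowerSeriesEquiv R (X 0) = PowerSeries.X := by
  change optionEquivLeft Unit R (rename _ (X _)) = _
  rw [rename_X]
  exact optionEquivLeft_X_none

theorem finTwoPowerSeriesEquiv_X_one :
    finTwoPowerSeriesEquiv R (X 1) = PowerSeries.C PowerSeries.X := by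
  change optionEquivLeft Unit R (rename _ (X _)) = _
  rw [rename_X]
  exact optionEquivLeft_X_some ()

theorem finTwoPowerSeriesEquiv_C (a : R) :
    finTwoPowerSeriesEquiv R (C a) = PowerSeries.C (PowerSeries.C a) := by
  change optionEquivLeft Unit R (rename _ (C a)) = _
  rw [rename_C]
  exact optionEquivLeft_C a

variable {R}

open scoped PowerSeries.WithPiTopology in
theorem isDomain_quotient_X_pow_sub_X_pow_sub_C [IsDomain R] [IsPrincipalIdealRing R]
    [TopologicalSpace R] [IsTopologicalRing R] [CompactSpace R] [T2Space R]
    {a : R} (ha : a ≠ 0) (ha_unit : ¬ IsUnit a) {k l : ℕ} (hk : k ≠ 0) (hl : (l : R) ≠ 0) :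
    IsDomain (MvPowerSeries (Fin 2) R ⧸
      Ideal.span {(X 0 : MvPowerSeries (Fin 2) R) ^ k - X 1 ^ l - C a}) := by
  let c : PowerSeries R := PowerSeries.X ^ l + PowerSeries.C a
  have hl0 : l ≠ 0 := by rintro rfl; simp at hl
  have hc_unit : ¬ IsUnit c := by simpa [c, PowerSeries.isUnit_iff_constantCoeff, hl0]
  have : CompactSpace (PowerSeries R) := inferInstanceAs (CompactSpace ((Unit →₀ ℕ) → R))
  have : IsAdicComplete (Ideal.span {c}) (PowerSeries R) :=
    isAdicComplete_of_compactSpace (by rwa [Ne, Ideal.span_singleton_eq_top])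
  have := isDomain_powerSeries_quotient_X_pow_sub_C (Ideal.mem_span_singleton_self c)
    (squarefree_X_pow_add_C ha hl) hk
  have himage : finTwoPowerSeriesEquiv R (X 0 ^ k - X 1 ^ l - C a) =
      PowerSeries.X ^ k - PowerSeries.C c := by
    simp only [c, map_sub, map_pow, map_add, finTwoPowerSeriesEquiv_X_zero,
      finTwoPowerSeriesEquiv_X_one, finTwoPowerSeriesEquiv_C, sub_sub]
  refine (Ideal.quotientEquiv _ (Ideal.span {PowerSeries.X ^ k - PowerSeries.C c})
    (finTwoPowerSeriesEquiv R).toRingEquiv ?_).toMulEquiv.isDomain _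
  rw [Ideal.map_span, Set.image_singleton, ← himage]
  rfl

theorem X_pow_notMem_span_X_C_X_pow {σ : Type*} {s t : σ} (hst : s ≠ t) {a : R}
    (ha : ¬ IsUnit a) {j k : ℕ} (hjk : j < k) :
    (X s : MvPowerSeries σ R) ^ j ∉ Ideal.span {X t, C a, X s ^ k} := by
  classical
  intro hmem
  obtain ⟨f, g, h, hfgh⟩ := Submodule.mem_span_triple.1 hmem
  have hcoeff := congrArg (coeff (Finsupp.single s j)) hfgh
  have hf : coeff (Finsupp.single s j) (f * X t) = 0 :=
    X_dvd_iff.1 (dvd_mul_left _ _) _ (Finsupp.single_eq_of_ne hst.symm)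
  have hh : coeff (Finsupp.single s j) (h * X s ^ k) = 0 :=
    X_pow_dvd_iff.1 (dvd_mul_left _ _) _ (by simpa using hjk)
  rw [map_add, map_add, smul_eq_mul, smul_eq_mul, smul_eq_mul, hf, hh, zero_add, add_zero,
    coeff_mul_C, coeff_X_pow, if_pos rfl] at hcoeff
  exact ha (IsUnit.of_mul_eq_one_right _ hcoeff)

end TwoVariables

section QuadraticExtension

theorem isIntegral_of_sq_add_mul_isIntegral {S T : Type*} [CommRing S] [CommRing T] [Algebra S T]
    {b v : T} (hb : IsIntegral S b) (hv : IsIntegral S (v ^ 2 + b * v)) : IsIntegral S v := by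
  nontriviality T
  let b' : integralClosure S T := ⟨b, hb⟩
  have hmonic : (Polynomial.X ^ 2 + Polynomial.C b' * Polynomial.X).Monic := by monicity!
  have hdegree : (Polynomial.X ^ 2 + Polynomial.C b' * Polynomial.X).natDegree = 2 := by
    compute_degree!
  refine isIntegral_trans (A := integralClosure S T) v
    (.of_aeval_monic hmonic (by rw [hdegree]; exact two_ne_zero) ?_)
  simpa [b', Algebra.smul_def] using hv.tower_top

theorem sq_add_mul_eq_of_two_mul_eq {T : Type*} [CommRing T] [IsDomain T] (h2 : (2 : T) ≠ 0)
    {p q r x y u v : T} (hrel : p * x ^ 2 - q * y ^ 2 = 4 * r) (hu : u ^ 2 = p * q)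
    (hv : 2 * v = p * x - u * y) : v ^ 2 + u * y * v = p * r := by
  apply mul_left_cancel₀ (pow_ne_zero 2 h2)
  linear_combination (2 * v + p * x + u * y) * hv - y ^ 2 * hu + p * hrel

theorem exists_isIntegral_sq_eq_mul_and_two_mul_eq {S Ω : Type*} [CommRing S] [Field Ω]
    [IsAlgClosed Ω] [Algebra S Ω] (h2 : (2 : Ω) ≠ 0) {p q r x y : S}
    (hrel : p * x ^ 2 - q * y ^ 2 = 4 * r) :
    ∃ u v : Ω, IsIntegral S u ∧ IsIntegral S v ∧
      u ^ 2 = algebraMap S Ω p * algebraMap S Ω q ∧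
      2 * v = algebraMap S Ω p * algebraMap S Ω x - u * algebraMap S Ω y ∧
      v ^ 2 + u * algebraMap S Ω y * v = algebraMap S Ω p * algebraMap S Ω r := by
  obtain ⟨u, hu⟩ := IsAlgClosed.exists_pow_nat_eq (algebraMap S Ω p * algebraMap S Ω q) two_pos
  obtain ⟨v, hv⟩ : ∃ v : Ω, 2 * v = algebraMap S Ω p * algebraMap S Ω x - u * algebraMap S Ω y :=
    ⟨_, mul_div_cancel₀ _ h2⟩
  have hrelΩ := congrArg (algebraMap S Ω) hrel
  simp only [map_sub, map_mul, map_pow, map_ofNat] at hrelΩ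
  have hquad : v ^ 2 + u * algebraMap S Ω y * v = algebraMap S Ω p * algebraMap S Ω r :=
    sq_add_mul_eq_of_two_mul_eq h2 hrelΩ hu hv
  have hu_int : IsIntegral S u :=
    .of_pow two_pos (hu ▸ isIntegral_algebraMap.mul isIntegral_algebraMap)
  have hv_int : IsIntegral S v :=
    isIntegral_of_sq_add_mul_isIntegral (hu_int.mul isIntegral_algebraMap)
      (hquad ▸ isIntegral_algebraMap.mul isIntegral_algebraMap)
  exact ⟨u, v, hu_int, hv_int, hu, hv, hquad⟩

end QuadraticExtension

theorem not_isUnit_two_padicInt_two : ¬ IsUnit (2 : ℤ_[2]) := by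
  exact_mod_cast (PadicInt.irreducible_p (p := 2)).not_isUnit

namespace SinghRing

variable {k l m : ℕ}

theorem singhX_pow_sub_singhY_pow (k l m : ℕ) : singhX k l m ^ k - singhY k l m ^ l = 2 ^ m := by
  have h := Ideal.Quotient.mk_singleton_self
    ((X 0 : MvPowerSeries (Fin 2) ℤ_[2]) ^ k - X 1 ^ l - 2 ^ m)
  rw [map_sub, map_sub, map_pow, map_pow, map_pow, map_ofNat] at h
  exact sub_eq_zero.1 h

protected theorem isDomain (hk : k ≠ 0) (hl : l ≠ 0) (hm : m ≠ 0) :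
    IsDomain (SinghRing k l m) := by
  have h := isDomain_quotient_X_pow_sub_X_pow_sub_C (R := ℤ_[2]) (pow_ne_zero m two_ne_zero)
    (mt (isUnit_pow_iff hm).1 not_isUnit_two_padicInt_two) hk (Nat.cast_ne_zero.2 hl)
  rwa [map_pow, map_ofNat] at h

protected theorem two_ne_zero (hk : k ≠ 0) (hl : l ≠ 0) (hm : 2 ≤ m) :
    (2 : SinghRing k l m) ≠ 0 := by
  intro h
  have hdvd : (X 0 : MvPowerSeries (Fin 2) ℤ_[2]) ^ k - X 1 ^ l - 2 ^ m ∣ 2 := by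
    rwa [← Ideal.mem_span_singleton, ← Ideal.Quotient.eq_zero_iff_mem, map_ofNat]
  have hdvd_const : (2 : ℤ_[2]) ^ m ∣ 2 ^ 1 := by
    simpa only [map_sub, map_pow, map_ofNat, constantCoeff_X, zero_pow hk, zero_pow hl, sub_self,
      zero_sub, neg_dvd, pow_one] using map_dvd (constantCoeff (R := ℤ_[2])) hdvd
  have hm1 := (pow_dvd_pow_iff two_ne_zero not_isUnit_two_padicInt_two).1 hdvd_const
  lia

theorem singhX_pow_notMem_span (hl : l ≠ 0) (hm : m ≠ 0) {j : ℕ} (hj : j < k) :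
    singhX k l m ^ j ∉ Ideal.span {singhY k l m, 2} := by
  intro hmem
  let J : Ideal (MvPowerSeries (Fin 2) ℤ_[2]) := Ideal.span {X 1, C 2, X 0 ^ k}
  have hX1 : X 1 ∈ J := Ideal.subset_span (by simp)
  have h2 : 2 ∈ J := Ideal.subset_span (by simp [map_ofNat])
  have hX0 : X 0 ^ k ∈ J := Ideal.subset_span (by simp)
  have hspan : Ideal.span {X 0 ^ k - X 1 ^ l - 2 ^ m} ≤ J := by
    rw [Ideal.span_singleton_le_iff_mem]
    exact sub_mem (sub_mem hX0 (Ideal.pow_mem_of_mem _ hX1 _ hl.pos))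
      (Ideal.pow_mem_of_mem _ h2 _ hm.pos)
  have hle : Ideal.span {singhY k l m, 2} ≤ J.map (Ideal.Quotient.mk _) := by
    rw [Ideal.span_le, Set.pair_subset_iff]
    exact ⟨Ideal.mem_map_of_mem _ hX1, Ideal.mem_map_of_mem _ h2⟩
  exact X_pow_notMem_span_X_C_X_pow Fin.zero_ne_one not_isUnit_two_padicInt_two hj
    ((Ideal.mem_quotient_iff_mem hspan).1 (hle hmem))

end SinghRing

namespace SinghExt

variable {k l m : ℕ}

theorem nonempty_of_isIntegral {Ω : Type} [CommRing Ω] [IsDomain Ω] [Algebra (SinghRing k l m) Ω]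
    (hinj : Function.Injective (algebraMap (SinghRing k l m) Ω)) {u v : Ω}
    (hu_int : IsIntegral (SinghRing k l m) u) (hv_int : IsIntegral (SinghRing k l m) v)
    (hu : u ^ 2 = algebraMap _ Ω (singhX k l m) ^ (k - 2) * algebraMap _ Ω (singhY k l m) ^ (l - 2))
    (hv : 2 * v = algebraMap _ Ω (singhX k l m) ^ (k - 1) - u * algebraMap _ Ω (singhY k l m))
    (hquad : v ^ 2 + u * algebraMap _ Ω (singhY k l m) * v =
      algebraMap _ Ω (singhX k l m) ^ (k - 2) * 2 ^ (m - 2)) :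
    Nonempty (SinghExt k l m) := by
  let T := Algebra.adjoin (SinghRing k l m) {u, v}
  let uT : T := ⟨u, Algebra.subset_adjoin (by simp)⟩
  let vT : T := ⟨v, Algebra.subset_adjoin (by simp)⟩
  have hvT : 2 * vT = algebraMap _ T (singhX k l m) ^ (k - 1) -
      uT * algebraMap _ T (singhY k l m) := Subtype.ext hv
  exact ⟨{
    T := T
    inj := fun _ _ h => hinj (congrArg Subtype.val h)
    fin := Algebra.finite_adjoin_of_finite_of_isIntegral (Set.toFinite _)
      (by rintro z (rfl | rfl) <;> assumption)
    u := uT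
    v := vT
    hu := Subtype.ext hu
    hv := hvT
    hquad := Subtype.ext (sub_eq_zero.2 hquad)
    hadj := by
      rw [← Algebra.adjoin_adjoin_coe_preimage]
      congr 1
      ext z
      simp [uT, vT, Subtype.ext_iff]
    hxk := Ideal.mem_span_pair.2 ⟨uT, vT, by linear_combination hvT⟩ }⟩

protected theorem nonempty (hk : 2 ≤ k) (hl : 2 ≤ l) (hm : 2 ≤ m) : Nonempty (SinghExt k l m) := by
  have := SinghRing.isDomain (k := k) (l := l) (m := m) (by lia) (by lia) (by lia)
  let Ω := AlgebraicClosure (FractionRing (SinghRing k l m))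
  have hinj : Function.Injective (algebraMap (SinghRing k l m) Ω) := by
    rw [IsScalarTower.algebraMap_eq _ (FractionRing (SinghRing k l m)) Ω]
    exact (algebraMap (FractionRing (SinghRing k l m)) Ω).injective.comp
      (IsFractionRing.injective _ _)
  have h2 : (2 : Ω) ≠ 0 := by
    simpa only [map_ofNat, map_zero] using
      hinj.ne (SinghRing.two_ne_zero (by lia) (by lia) hm)
  have hrel : singhX k l m ^ (k - 2) * singhX k l m ^ 2 -
      singhY k l m ^ (l - 2) * singhY k l m ^ 2 = 4 * 2 ^ (m - 2) := by
    rw [pow_sub_mul_pow _ hk, pow_sub_mul_pow _ hl, SinghRing.singhX_pow_sub_singhY_pow,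
      ← pow_mul_pow_sub _ hm]
    norm_num
  obtain ⟨u, v, hu_int, hv_int, hu, hv, hquad⟩ :=
    exists_isIntegral_sq_eq_mul_and_two_mul_eq h2 hrel
  rw [← map_mul, ← pow_succ, show k - 2 + 1 = k - 1 by lia] at hv
  simp only [map_pow, map_ofNat] at hu hv hquad
  exact nonempty_of_isIntegral hinj hu_int hv_int hu hv hquad

theorem not_exists_retraction (hk : k ≠ 0) (hl : l ≠ 0) (hm : m ≠ 0) (E : SinghExt k l m) :
    ¬ ∃ φ : E.T →ₗ[SinghRing k l m] SinghRing k l m,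
      φ ∘ₗ Algebra.linearMap (SinghRing k l m) E.T = LinearMap.id := by
  rintro ⟨φ, hφ⟩
  refine SinghRing.singhX_pow_notMem_span hl hm (Nat.sub_one_lt hk) ?_
  rw [← comap_map_algebraMap_of_retraction hφ (Ideal.span _), Ideal.mem_comap, Ideal.map_span,
    Set.image_pair, map_pow, map_ofNat]
  exact E.hxk

end SinghExt

theorem singh_not_splinter_general (k l m : ℕ) (hk : 2 ≤ k) (hl : 2 ≤ l) (hm : 2 ≤ m) :
    singhX k l m ∉ Ideal.span {singhY k l m, (2 : SinghRing k l m)} ∧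
    ∃ E : SinghExt k l m,
      ¬ ∃ φ : E.T →ₗ[SinghRing k l m] SinghRing k l m,
        φ.comp (Algebra.linearMap (SinghRing k l m) E.T) = LinearMap.id := by
  have hl0 : l ≠ 0 := by lia
  have hm0 : m ≠ 0 := by lia
  obtain ⟨E⟩ := SinghExt.nonempty hk hl hm
  exact ⟨by simpa using SinghRing.singhX_pow_notMem_span hl0 hm0 hk, E,
    E.not_exists_retraction (by lia) hl0 hm0⟩

/-- For `k, l, m > 2`, in `S = ℤ₂[[x,y]]/(x^k − y^l − 2^m)` one has `x ∉ (y,2)S`, and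
there is a module-finite extension domain `T = S[u,v]` with `x^{k-1} = uy + 2v ∈ (y,2)T`
of which `S` is not a direct summand as an `S`-module; consequently `S` is not a
splinter. -/
theorem singh_not_splinter (k l m : ℕ) (hk : 2 < k) (hl : 2 < l) (hm : 2 < m) :
    singhX k l m ∉ Ideal.span {singhY k l m, (2 : SinghRing k l m)} ∧
    ∃ E : SinghExt k l m,
      ¬ ∃ φ : E.T →ₗ[SinghRing k l m] SinghRing k l m,
        φ.comp (Algebra.linearMap (SinghRing k l m) E.T) = LinearMap.id :=
  singh_not_splinter_general k l m hk.le hl.le hm.le
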